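/- For every a > 0, b > 0 and t > 0, P[ M_t < b and A_t < a ] = e^{-2/a} · E[ exp( 2·M_t / (a + A_t) ) · 1{ M_t ≤ b·(1 + A_t/a)² } ]. -/

import Mathlib

open MeasureTheory ProbabilityTheory Real Set

noncomputable section

/-- A standard one-dimensional Brownian motion `B` (with `B 0 = 0`, continuous
paths, Gaussian increments and independent increments) on a probability space
with measure `P`. -/
structure IsBrownianMotion {Ω : Type*} [MeasurableSpace Ω]
    (P : Measure Ω) (B : ℝ → Ω → ℝ) : Prop where
  isProbabilityMeasure : IsProbabilityMeasure P
  measurable : ∀ t : ℝ, Measurable (B t)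
  start : ∀ ω, B 0 ω = 0
  continuous_paths : ∀ ω, Continuous fun t => B t ω
  gaussian_increments : ∀ s t : ℝ, 0 ≤ s → s ≤ t →
    P.map (fun ω => B t ω - B s ω) = gaussianReal 0 (Real.toNNReal (t - s))
  indep_increments : ∀ t : ℕ → ℝ, Monotone t → 0 ≤ t 0 →
    iIndepFun
      (fun (i : ℕ) (ω : Ω) => B (t (i + 1)) ω - B (t i) ω) P

/-- The exponential martingale `M_t = exp (B_t - t/2)`. -/
def M {Ω : Type*} (B : ℝ → Ω → ℝ) (t : ℝ) (ω : Ω) : ℝ :=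
  Real.exp (B t ω - t / 2)

/-- The time integral `A_t = ∫_0^t exp (B_s - s/2) ds`. -/
def A {Ω : Type*} (B : ℝ → Ω → ℝ) (t : ℝ) (ω : Ω) : ℝ :=
  ∫ s in (0 : ℝ)..t, Real.exp (B s ω - s / 2)

/-- The time integral with drift `ν`: `A_t^{(ν)} = ∫_0^t exp (B_s + (ν - 1/2) s) ds`. -/
def Adrift {Ω : Type*} (B : ℝ → Ω → ℝ) (ν t : ℝ) (ω : Ω) : ℝ :=
  ∫ s in (0 : ℝ)..t, Real.exp (B s ω + (ν - 1 / 2) * s)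

/-- one-step weight -/
def omg (h c x : ℝ) : ℝ :=
  |1 - c| * Real.exp (c * (x + 2) * ((2 - c) * x - 2 * c + h) / (2 * h))

lemma omg_nonneg (h c x : ℝ) : 0 ≤ omg h c x := by unfold omg; positivity

lemma affine_lintegral (c : ℝ) (f : ℝ → ENNReal) (hf : Measurable f) :
    ∫⁻ x, ENNReal.ofReal |1 - c| * f ((1 - c) * x - 2 * c) ≤ ∫⁻ x, f x := by
  by_cases hc : 1 - c = 0
  · simp [hc]
  · have h1 : ∫⁻ x, f ((1 - c) * x - 2 * c) = ∫⁻ x, f (x - 2 * c) ∂(volume.map ((1 - c) * ·)) := by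
      rw [lintegral_map (by fun_prop) (by fun_prop)]
    rw [lintegral_const_mul _ (by fun_prop), h1, Real.map_volume_mul_left hc,
      lintegral_smul_measure, smul_eq_mul, ← mul_assoc, ← ENNReal.ofReal_mul (abs_nonneg _),
      abs_inv, mul_inv_cancel₀ (abs_ne_zero.mpr hc), ENNReal.ofReal_one, one_mul,
      lintegral_sub_right_eq_self f]

lemma one_step (h : ℝ) (hh : 0 < h) (c : ℝ) (f : ℝ → ENNReal) (hf : Measurable f) :
    ∫⁻ x, ENNReal.ofReal (omg h c x) * f ((1 - c) * x - 2 * c)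
      ∂(gaussianReal (-(h / 2)) h.toNNReal)
      ≤ ∫⁻ x, f x ∂(gaussianReal (-(h / 2)) h.toNNReal) := by
  have hv : h.toNNReal ≠ 0 := by simpa using hh
  have hvv : (h.toNNReal : ℝ) = h := Real.coe_toNNReal _ hh.le
  have mo : Measurable (omg h c) := by unfold omg; fun_prop
  rw [gaussianReal_of_var_ne_zero _ hv,
    lintegral_withDensity_eq_lintegral_mul _ (measurable_gaussianPDF _ _) (by fun_prop),
    lintegral_withDensity_eq_lintegral_mul _ (measurable_gaussianPDF _ _) hf]
  refine le_trans (le_of_eq ?_) (affine_lintegral c _ ((measurable_gaussianPDF _ _).mul hf))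
  refine lintegral_congr fun x => ?_
  simp only [Pi.mul_apply, gaussianPDF, ← mul_assoc]
  rw [← ENNReal.ofReal_mul (gaussianPDFReal_nonneg _ _ _), ← ENNReal.ofReal_mul (abs_nonneg _)]
  congr 2
  simp only [gaussianPDFReal, omg, hvv]
  rw [mul_comm, mul_assoc, ← mul_assoc (rexp _), mul_comm (rexp _), mul_assoc _ (rexp _) (rexp _),
    ← Real.exp_add]
  congr 3
  field_simp
  ring

lemma freeze {Ω T : Type*} [MeasurableSpace Ω] [MeasurableSpace T] (P : Measure Ω)
    [IsProbabilityMeasure P] (S : Ω → T) (x : Ω → ℝ) (hS : Measurable S) (hx : Measurable x)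
    (hi : IndepFun S x P) (f : T × ℝ → ENNReal) (hf : Measurable f) :
    ∫⁻ w, f (S w, x w) ∂P = ∫⁻ w, ∫⁻ y, f (S w, y) ∂(P.map x) ∂P := by
  have h1 := (indepFun_iff_map_prod_eq_prod_map_map hS.aemeasurable hx.aemeasurable).1 hi
  have : IsProbabilityMeasure (P.map x) := Measure.isProbabilityMeasure_map hx.aemeasurable
  rw [← lintegral_map (f := f) (g := fun w => (S w, x w)) hf (hS.prodMk hx), h1,
    lintegral_prod _ hf.aemeasurable, lintegral_map (Measurable.lintegral_prod_right' hf) hS]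

def Xs (x : ℕ → ℝ) (k : ℕ) : ℝ := ∑ j ∈ Finset.range k, x j
def As (h : ℝ) (x : ℕ → ℝ) (k : ℕ) : ℝ := ∑ j ∈ Finset.range k, h * Real.exp (Xs x j)
def kap (α h : ℝ) (x : ℕ → ℝ) (k : ℕ) : ℝ := α * Real.exp (Xs x k) / (1 + α * As h x k)
def cc (α h : ℝ) (x : ℕ → ℝ) (k : ℕ) : ℝ := h * kap α h x k
def Ys (α h : ℝ) (x : ℕ → ℝ) (k : ℕ) : ℝ :=
  ∑ j ∈ Finset.range k, ((1 - cc α h x j) * x j - 2 * cc α h x j)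
def AY (α h : ℝ) (x : ℕ → ℝ) (k : ℕ) : ℝ := ∑ j ∈ Finset.range k, h * Real.exp (Ys α h x j)
def Ws (α h : ℝ) (x : ℕ → ℝ) (k : ℕ) : ℝ := ∏ j ∈ Finset.range k, omg h (cc α h x j) (x j)

lemma Xs_succ (x : ℕ → ℝ) (k : ℕ) : Xs x (k + 1) = Xs x k + x k := Finset.sum_range_succ _ _
lemma As_succ (h : ℝ) (x : ℕ → ℝ) (k : ℕ) : As h x (k + 1) = As h x k + h * rexp (Xs x k) :=
  Finset.sum_range_succ _ _
lemma Ys_succ (α h : ℝ) (x : ℕ → ℝ) (k : ℕ) :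
    Ys α h x (k + 1) = Ys α h x k + ((1 - cc α h x k) * x k - 2 * cc α h x k) :=
  Finset.sum_range_succ _ _
lemma AY_succ (α h : ℝ) (x : ℕ → ℝ) (k : ℕ) :
    AY α h x (k + 1) = AY α h x k + h * rexp (Ys α h x k) := Finset.sum_range_succ _ _
lemma Ws_succ (α h : ℝ) (x : ℕ → ℝ) (k : ℕ) :
    Ws α h x (k + 1) = Ws α h x k * omg h (cc α h x k) (x k) := Finset.prod_range_succ _ _

section meas
variable {Ω : Type*} {mΩ : MeasurableSpace Ω} {x : ℕ → Ω → ℝ}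

lemma meas_Xs (k : ℕ) (hx : ∀ j < k, Measurable (x j)) :
    Measurable (fun w => Xs (fun j => x j w) k) :=
  Finset.measurable_sum _ fun j hj => hx j (Finset.mem_range.1 hj)

lemma meas_As (h : ℝ) (k : ℕ) (hx : ∀ j < k, Measurable (x j)) :
    Measurable (fun w => As h (fun j => x j w) k) :=
  Finset.measurable_sum _ fun j hj => by
    have := meas_Xs (x := x) j fun i hi => hx i (hi.trans (Finset.mem_range.1 hj))
    fun_prop

lemma meas_cc (α h : ℝ) (k : ℕ) (hx : ∀ j < k, Measurable (x j)) :
    Measurable (fun w => cc α h (fun j => x j w) k) := by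
  have h1 := meas_Xs (x := x) k hx
  have h2 := meas_As (x := x) h k hx
  unfold cc kap
  fun_prop

lemma meas_Ys (α h : ℝ) (k : ℕ) (hx : ∀ j < k, Measurable (x j)) :
    Measurable (fun w => Ys α h (fun j => x j w) k) :=
  Finset.measurable_sum _ fun j hj => by
    have := meas_cc (x := x) α h j fun i hi => hx i (hi.trans (Finset.mem_range.1 hj))
    have := hx j (Finset.mem_range.1 hj)
    fun_prop

lemma meas_AY (α h : ℝ) (k : ℕ) (hx : ∀ j < k, Measurable (x j)) :
    Measurable (fun w => AY α h (fun j => x j w) k) :=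
  Finset.measurable_sum _ fun j hj => by
    have := meas_Ys (x := x) α h j fun i hi => hx i (hi.trans (Finset.mem_range.1 hj))
    fun_prop

lemma meas_Ws (α h : ℝ) (k : ℕ) (hx : ∀ j < k, Measurable (x j)) :
    Measurable (fun w => Ws α h (fun j => x j w) k) :=
  Finset.measurable_prod _ fun j hj => by
    have := meas_cc (x := x) α h j fun i hi => hx i (hi.trans (Finset.mem_range.1 hj))
    have := hx j (Finset.mem_range.1 hj)
    unfold omg
    fun_prop

lemma indep_of_past {T : Type*} [MeasurableSpace T] (P : Measure Ω)
    (hx : ∀ j, Measurable (x j)) (hi : iIndepFun x P) (k : ℕ) (S : Ω → T)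
    (hS : ∀ m : MeasurableSpace Ω, (∀ j < k, Measurable[m] (x j)) → Measurable[m] S) :
    IndepFun S (x k) P := by
  have h1 := indep_iSup_of_disjoint (m := fun j => MeasurableSpace.comap (x j) inferInstance)
    (fun j => (hx j).comap_le) hi (S := Set.Iio k) (T := {k}) (by simp)
  rw [IndepFun_iff_Indep]
  refine indep_of_indep_of_le_left (indep_of_indep_of_le_right h1 ?_) (Measurable.comap_le ?_)
  · simp
  · refine hS _ fun j hj => ?_
    refine Measurable.mono (comap_measurable (x j)) ?_ le_rfl
    exact le_iSup₂_of_le j hj le_rfl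
end meas

lemma discrete_bound {Ω : Type*} [MeasurableSpace Ω] (P : Measure Ω) [IsProbabilityMeasure P]
    (α h : ℝ) (hh : 0 < h) (x : ℕ → Ω → ℝ) (hx : ∀ j, Measurable (x j)) (hi : iIndepFun x P)
    (hl : ∀ j, P.map (x j) = gaussianReal (-(h / 2)) h.toNNReal) (k : ℕ) :
    ∀ g : ℝ × ℝ → ENNReal, Measurable g →
    ∫⁻ w, ENNReal.ofReal (Ws α h (fun j => x j w) k) *
        g (Ys α h (fun j => x j w) k, AY α h (fun j => x j w) k) ∂P
      ≤ ∫⁻ w, g (Xs (fun j => x j w) k, As h (fun j => x j w) k) ∂P := by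
  induction k with
  | zero => intro g hg; simp [Ws, Ys, AY, Xs, As]
  | succ k ih =>
    intro g hg
    set γ := gaussianReal (-(h / 2)) h.toNNReal with hγ
    let Kg : ℝ × ℝ → ENNReal := fun p => ∫⁻ y, g (p.1 + y, p.2 + h * rexp p.1) ∂γ
    have hKg : Measurable Kg := by
      refine Measurable.lintegral_prod_right'
        (f := fun q : (ℝ × ℝ) × ℝ => g (q.1.1 + q.2, q.1.2 + h * rexp q.1.1)) ?_
      fun_prop
    have hR : ∫⁻ w, g (Xs (fun j => x j w) (k + 1), As h (fun j => x j w) (k + 1)) ∂P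
        = ∫⁻ w, Kg (Xs (fun j => x j w) k, As h (fun j => x j w) k) ∂P := by
      have := freeze P (fun w => (Xs (fun j => x j w) k, As h (fun j => x j w) k)) (x k)
        ((meas_Xs k fun j _ => hx j).prodMk (meas_As h k fun j _ => hx j)) (hx k)
        (indep_of_past P hx hi k _ fun m hm => (meas_Xs k hm).prodMk (meas_As h k hm))
        (fun q : (ℝ × ℝ) × ℝ => g (q.1.1 + q.2, q.1.2 + h * rexp q.1.1)) (by fun_prop)
      rw [hl] at this
      rw [← this]
      refine lintegral_congr fun w => ?_
      simp [Xs, As, Finset.sum_range_succ]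
    rw [hR]
    refine le_trans ?_ (ih Kg hKg)
    have := freeze P (fun w => (Ws α h (fun j => x j w) k, Ys α h (fun j => x j w) k,
        AY α h (fun j => x j w) k, cc α h (fun j => x j w) k)) (x k)
        ((meas_Ws α h k fun j _ => hx j).prodMk ((meas_Ys α h k fun j _ => hx j).prodMk
          ((meas_AY α h k fun j _ => hx j).prodMk (meas_cc α h k fun j _ => hx j)))) (hx k)
        (indep_of_past P hx hi k _ fun m hm => 
        ((meas_Ws α h k hm).prodMk ((meas_Ys α h k hm).prodMk
          ((meas_AY α h k hm).prodMk (meas_cc α h k hm)))))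
        (fun q : (ℝ × ℝ × ℝ × ℝ) × ℝ => ENNReal.ofReal (q.1.1 * omg h q.1.2.2.2 q.2) *
          g (q.1.2.1 + ((1 - q.1.2.2.2) * q.2 - 2 * q.1.2.2.2), q.1.2.2.1 + h * rexp q.1.2.1))
        (by unfold omg; fun_prop)
    rw [hl] at this
    have hL : ∫⁻ w, ENNReal.ofReal (Ws α h (fun j => x j w) (k + 1)) *
        g (Ys α h (fun j => x j w) (k + 1), AY α h (fun j => x j w) (k + 1)) ∂P = _ :=
      Eq.trans (lintegral_congr fun w => by
        simp only [Ws_succ, Ys_succ, AY_succ]) this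
    rw [hL]
    refine lintegral_mono fun w => ?_
    simp only
    have hW : 0 ≤ Ws α h (fun j => x j w) k := Finset.prod_nonneg fun j _ => omg_nonneg _ _ _
    simp only [ENNReal.ofReal_mul hW, mul_assoc]
    rw [lintegral_const_mul _ (by unfold omg; fun_prop)]
    gcongr
    exact one_step h hh _ (fun y => g (Ys α h (fun j => x j w) k + y, AY α h (fun j => x j w) k +
      h * rexp (Ys α h (fun j => x j w) k))) (by fun_prop)

lemma log_one_sub_bound (c : ℝ) (hc : |c| ≤ 1 / 2) : |Real.log (1 - c) + c| ≤ 2 * c ^ 2 := by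
  have h := Real.abs_log_sub_add_sum_range_le (x := c) (by linarith) 1
  simp only [Finset.range_one, Finset.sum_singleton] at h
  norm_num at h
  rw [add_comm]
  refine h.trans ?_
  rw [div_le_iff₀ (by linarith)]
  nlinarith [sq_nonneg c, abs_nonneg c]

lemma exp_third (x : ℝ) (hx : |x| ≤ 1) : |rexp x - 1 - x - x ^ 2 / 2| ≤ |x| ^ 3 := by
  have h := Real.exp_bound hx (n := 3) (by norm_num)
  simp only [Finset.sum_range_succ, Finset.range_zero, Finset.sum_empty] at h
  norm_num [Nat.factorial] at h
  have h2 : rexp x - 1 - x - x ^ 2 / 2 = rexp x - (1 + x + x ^ 2 / 2) := by ring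
  rw [h2]
  refine h.trans ?_
  have : 0 ≤ |x| ^ 3 := by positivity
  linarith

lemma step_log (K h κ x : ℝ) (hh : 0 < h) (hκ : |κ| ≤ K) (hK : K * h ≤ 1 / 2) (hx : |x| ≤ 1) :
    0 < omg h (h * κ) x ∧
    |Real.log (omg h (h * κ) x) - 2 * (κ * rexp x / (1 + h * κ) - κ)|
      ≤ (3 * K + 8 * K ^ 2 + 12 * K ^ 3) * (|x| ^ 3 + h * |x| + h ^ 2) := by
  have hK0 : 0 ≤ K := (abs_nonneg κ).trans hκ
  obtain ⟨c, hc⟩ : ∃ c, c = h * κ := ⟨_, rfl⟩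
  have hcK : |c| ≤ K * h := by
    rw [hc, abs_mul, abs_of_pos hh]; nlinarith
  have hc2 : |c| ≤ 1 / 2 := hcK.trans hK
  have hcl := abs_le.1 hc2
  rw [← hc]
  have h1c : 0 < 1 - c := by linarith
  have h1c' : 0 < 1 + c := by linarith
  have hpos : 0 < omg h c x := by
    unfold omg; rw [abs_of_pos h1c]; positivity
  refine ⟨hpos, ?_⟩
  have hlog : Real.log (omg h c x) = Real.log (1 - c)
      + κ * (x + 2) * ((2 - c) * x - 2 * c + h) / 2 := by
    unfold omg
    rw [abs_of_pos h1c, Real.log_mul h1c.ne' (Real.exp_pos _).ne', Real.log_exp, hc]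
    congr 1
    field_simp
  set r1 := Real.log (1 - c) + c with hr1
  set r2 := rexp x - 1 - x - x ^ 2 / 2 with hr2
  have b1 : |r1| ≤ 2 * (K ^ 2 * h ^ 2) := by
    refine (log_one_sub_bound c hc2).trans ?_
    have : c ^ 2 ≤ (K * h) ^ 2 := sq_le_sq' (by linarith [neg_abs_le c]) ((le_abs_self c).trans hcK)
    nlinarith
  have b2 : |r2| ≤ |x| ^ 3 := exp_third x hx
  have b3 : |rexp x - 1| ≤ 2 * |x| := Real.abs_exp_sub_one_le hx
  have b4 : |rexp x / (1 + c)| ≤ 6 := by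
    rw [abs_of_pos (by positivity), div_le_iff₀ h1c']
    have := (abs_le.1 b3).2
    linarith
  have key : Real.log (omg h c x) - 2 * (κ * rexp x / (1 + c) - κ)
      = r1 + (κ * (-(c * x) * x) / 2 + κ * ((h - 4 * c) * x) / 2) - 2 * (κ * r2)
        + 2 * (κ * (c * (rexp x - 1))) - 2 * (κ * (c * (c * (rexp x / (1 + c))))) := by
    rw [hlog, hr1, hr2]
    have : c = h * κ := hc
    field_simp
    rw [this]
    ring
  rw [key]
  have e1 : |κ * (-(c * x) * x) / 2| ≤ K ^ 2 * (h * |x|) := by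
    rw [abs_div, abs_mul, abs_mul, abs_neg, abs_mul, abs_two]
    calc |κ| * (|c| * |x| * |x|) / 2 ≤ K * (K * h * |x| * 1) / 2 := by gcongr
      _ ≤ _ := by
        have : 0 ≤ K ^ 2 * (h * |x|) := by positivity
        nlinarith
  have e2 : |κ * ((h - 4 * c) * x) / 2| ≤ (K + 2 * K ^ 2) * (h * |x|) := by
    rw [abs_div, abs_mul, abs_mul, abs_two]
    have : |h - 4 * c| ≤ h + 4 * (K * h) := by
      refine (abs_sub _ _).trans ?_
      rw [abs_mul, abs_of_pos hh]; norm_num; linarith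
    calc |κ| * (|h - 4 * c| * |x|) / 2 ≤ K * ((h + 4 * (K * h)) * |x|) / 2 := by gcongr
      _ ≤ _ := by
        have : 0 ≤ K * (h * |x|) := by positivity
        nlinarith
  have e3 : |2 * (κ * r2)| ≤ 2 * (K * |x| ^ 3) := by
    rw [abs_mul, abs_mul, abs_two]; gcongr
  have e4 : |2 * (κ * (c * (rexp x - 1)))| ≤ 4 * K ^ 2 * (h * |x|) := by
    rw [abs_mul, abs_mul, abs_mul, abs_two]
    calc 2 * (|κ| * (|c| * |rexp x - 1|)) ≤ 2 * (K * (K * h * (2 * |x|))) := by gcongr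
      _ = _ := by ring
  have e5 : |2 * (κ * (c * (c * (rexp x / (1 + c)))))| ≤ 12 * K ^ 3 * h ^ 2 := by
    rw [abs_mul, abs_mul, abs_mul, abs_mul, abs_two]
    calc 2 * (|κ| * (|c| * (|c| * |rexp x / (1 + c)|)))
        ≤ 2 * (K * (K * h * (K * h * 6))) := by gcongr
      _ = _ := by ring
  have p1 : 0 ≤ h * |x| := by positivity
  have p2 : 0 ≤ |x| ^ 3 := by positivity
  have p3 : 0 ≤ h ^ 2 := by positivity
  have tri : ∀ u v1 v2 v3 v4 v5 : ℝ, |u + (v1 + v2) - v3 + v4 - v5|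
      ≤ |u| + |v1| + |v2| + |v3| + |v4| + |v5| := by
    intro u v1 v2 v3 v4 v5
    rw [abs_le]
    constructor <;>
    linarith [le_abs_self u, neg_abs_le u, le_abs_self v1, neg_abs_le v1, le_abs_self v2,
      neg_abs_le v2, le_abs_self v3, neg_abs_le v3, le_abs_self v4, neg_abs_le v4,
      le_abs_self v5, neg_abs_le v5]
  refine (tri _ _ _ _ _ _).trans ?_
  have q1 : 0 ≤ K * (h * |x|) := by positivity
  have q2 : 0 ≤ K ^ 2 * (h * |x|) := by positivity
  have q3 : 0 ≤ K ^ 3 * (h * |x|) := by positivity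
  have q4 : 0 ≤ K * |x| ^ 3 := by positivity
  have q5 : 0 ≤ K ^ 2 * |x| ^ 3 := by positivity
  have q6 : 0 ≤ K ^ 3 * |x| ^ 3 := by positivity
  have q7 : 0 ≤ K * h ^ 2 := by positivity
  have q8 : 0 ≤ K ^ 2 * h ^ 2 := by positivity
  have q9 : 0 ≤ K ^ 3 * h ^ 2 := by positivity
  linarith

section track
variable (α h K z E : ℝ) (x : ℕ → ℝ) (n : ℕ)

lemma Z_succ (hz : 0 < z) (hZ : ∀ k ≤ n, z ≤ 1 + α * As h x k) (k : ℕ) (hk : k < n) :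
    1 + α * As h x (k + 1) = (1 + α * As h x k) * (1 + cc α h x k) := by
  have : (1 + α * As h x k) ≠ 0 := (hz.trans_le (hZ k hk.le)).ne'
  rw [As_succ, cc, kap]
  field_simp
  ring

lemma kap_succ (hz : 0 < z) (hZ : ∀ k ≤ n, z ≤ 1 + α * As h x k) (k : ℕ) (hk : k < n) :
    kap α h x (k + 1) = kap α h x k * rexp (x k) / (1 + h * kap α h x k) := by
  have h1 := Z_succ α h z x n hz hZ k hk
  have : (1 + α * As h x k) ≠ 0 := (hz.trans_le (hZ k hk.le)).ne'
  conv_lhs => rw [kap, h1, Xs_succ, Real.exp_add]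
  conv_rhs => rw [kap]
  rw [cc, kap]
  field_simp

lemma track_W (hh : 0 < h) (hz : 0 < z) (hZ : ∀ k ≤ n, z ≤ 1 + α * As h x k)
    (hκ : ∀ k ≤ n, |kap α h x k| ≤ K) (hK : K * h ≤ 1 / 2) (hx : ∀ k < n, |x k| ≤ 1) :
    ∀ k ≤ n, 0 < Ws α h x k ∧ |Real.log (Ws α h x k) - 2 * (kap α h x k - kap α h x 0)|
      ≤ (3 * K + 8 * K ^ 2 + 12 * K ^ 3) *
        ∑ j ∈ Finset.range k, (|x j| ^ 3 + h * |x j| + h ^ 2) := by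
  intro k
  induction k with
  | zero => intro _; simp [Ws]
  | succ k ih =>
    intro hk
    obtain ⟨i1, i2⟩ := ih (by omega)
    obtain ⟨s1, s2⟩ := step_log K h (kap α h x k) (x k) hh (hκ k (by omega)) hK (hx k hk)
    rw [← kap_succ α h z x n hz hZ k hk] at s2
    have s1' : 0 < omg h (cc α h x k) (x k) := s1
    refine ⟨by rw [Ws_succ]; positivity, ?_⟩
    rw [Ws_succ, Real.log_mul i1.ne' s1'.ne', Finset.sum_range_succ, mul_add]
    refine le_trans (le_of_eq ?_) ((abs_add_le _ _).trans (add_le_add i2 s2))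
    congr 1
    rw [cc]
    ring

lemma track_Y (hh : 0 < h) (hz : 0 < z) (hZ : ∀ k ≤ n, z ≤ 1 + α * As h x k)
    (hκ : ∀ k ≤ n, |kap α h x k| ≤ K) (hK : K * h ≤ 1 / 2) :
    ∀ k ≤ n, |Ys α h x k - (Xs x k - 2 * Real.log (1 + α * As h x k))|
      ≤ (K + 4 * K ^ 2) * ∑ j ∈ Finset.range k, (h * |x j| + h ^ 2) := by
  intro k
  induction k with
  | zero => intro _; simp [Ys, Xs, As]
  | succ k ih =>
    intro hk
    have i2 := ih (by omega)
    have hK0 : 0 ≤ K := (abs_nonneg _).trans (hκ 0 (by omega))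
    have hcK : |cc α h x k| ≤ K * h := by
      rw [cc, abs_mul, abs_of_pos hh]; nlinarith [hκ k (by omega)]
    have hc2 : |cc α h x k| ≤ 1 / 2 := hcK.trans hK
    have hcl := abs_le.1 hc2
    have hl := log_one_sub_bound (-cc α h x k) (by rwa [abs_neg])
    rw [Z_succ α h z x n hz hZ k hk, Real.log_mul (hz.trans_le (hZ k (by omega))).ne'
      (by linarith), Ys_succ, Xs_succ, Finset.sum_range_succ, mul_add (K + 4 * K ^ 2)]
    set c := cc α h x k
    have st : |-(c * x k) + 2 * (Real.log (1 - -c) + -c)| ≤ (K + 4 * K ^ 2) * (h * |x k| + h ^ 2) := by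
      refine (abs_add_le _ _).trans ?_
      rw [abs_neg, abs_mul, abs_mul, abs_two]
      have : c ^ 2 ≤ (K * h) ^ 2 :=
        sq_le_sq' (by linarith [neg_abs_le c]) ((le_abs_self c).trans hcK)
      have e1 : |c| * |x k| ≤ K * h * |x k| := by gcongr
      have q1 : 0 ≤ K ^ 2 * (h * |x k|) := by positivity
      have q2 : 0 ≤ K * h ^ 2 := by positivity
      nlinarith
    refine le_trans (le_of_eq ?_) ((abs_add_le _ _).trans (add_le_add i2 st))
    congr 1
    rw [sub_neg_eq_add]
    ring

lemma track_A (η : ℝ) (hη : η ≤ 1) (hh : 0 < h) (hz : 0 < z)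
    (hZ : ∀ k ≤ n, z ≤ 1 + α * As h x k)
    (hE : ∀ k ≤ n, rexp (Xs x k) ≤ E)
    (hκ : ∀ k ≤ n, |kap α h x k| ≤ K) (hK : K * h ≤ 1 / 2)
    (hY : ∀ k ≤ n, |Ys α h x k - (Xs x k - 2 * Real.log (1 + α * As h x k))| ≤ η) :
    ∀ k ≤ n, |AY α h x k - As h x k / (1 + α * As h x k)|
      ≤ k * (h * (E / z ^ 2 * (2 * η + 2 * (K * h)))) := by
  intro k
  induction k with
  | zero => intro _; simp [AY, As]
  | succ k ih =>
    intro hk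
    have i2 := ih (by omega)
    have hK0 : 0 ≤ K := (abs_nonneg _).trans (hκ 0 (by omega))
    have hcK : |cc α h x k| ≤ K * h := by
      rw [cc, abs_mul, abs_of_pos hh]; nlinarith [hκ k (by omega)]
    have hc2 : |cc α h x k| ≤ 1 / 2 := hcK.trans hK
    have hcl := abs_le.1 hc2
    have hzk := hZ k (by omega)
    have hy := hY k (by omega)
    have hzs := Z_succ α h z x n hz hZ k hk
    have hEk := hE k (by omega)
    have hcdef : cc α h x k * (1 + α * As h x k) = h * (α * rexp (Xs x k)) := by
      rw [cc, kap]; have := (hz.trans_le hzk).ne'; field_simp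
    rw [hzs, AY_succ, As_succ]
    set c := cc α h x k
    set Z := 1 + α * As h x k with hZd
    have hZp : 0 < Z := hz.trans_le hzk
    obtain ⟨θ, hθ⟩ : ∃ θ, θ = Ys α h x k - (Xs x k - 2 * Real.log Z) := ⟨_, rfl⟩
    rw [← hθ] at hy
    have hYe : rexp (Ys α h x k) = rexp (Xs x k) / Z ^ 2 * rexp θ := by
      have : Ys α h x k = Xs x k - (Real.log Z + Real.log Z) + θ := by rw [hθ]; ring
      rw [this, Real.exp_add, Real.exp_sub, Real.exp_add, Real.exp_log hZp, sq]
    have h1c : 0 < 1 + c := by linarith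
    have hq : rexp (Xs x k) / Z ^ 2 ≤ E / z ^ 2 := by
      have : 0 ≤ E := (Real.exp_pos _).le.trans hEk
      gcongr
    have b1 : |rexp θ - 1| ≤ 2 * η := (Real.abs_exp_sub_one_le (hy.trans hη)).trans (by linarith)
    have b2 : |1 - 1 / (1 + c)| ≤ 2 * (K * h) := by
      have : 1 - 1 / (1 + c) = c / (1 + c) := by field_simp; ring
      rw [this, abs_div, abs_of_pos h1c, div_le_iff₀ h1c]
      nlinarith [abs_nonneg c]
    have st : |h * (rexp (Xs x k) / Z ^ 2 * ((rexp θ - 1) + (1 - 1 / (1 + c))))|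
        ≤ h * (E / z ^ 2 * (2 * η + 2 * (K * h))) := by
      rw [abs_mul, abs_mul, abs_of_pos hh, abs_of_pos (by positivity : 0 < rexp (Xs x k) / Z ^ 2)]
      have := (abs_add_le (rexp θ - 1) (1 - 1 / (1 + c))).trans (add_le_add b1 b2)
      have : 0 ≤ E := (Real.exp_pos _).le.trans hEk
      gcongr
    push_cast
    rw [add_mul (k : ℝ) 1, one_mul]
    refine le_trans (le_of_eq ?_) ((abs_add_le _ _).trans (add_le_add i2 st))
    congr 1
    rw [hYe]
    have hA : α * As h x k = Z - 1 := by rw [hZd]; ring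
    have e3 : (As h x k + h * rexp (Xs x k)) / (Z * (1 + c)) = As h x k / Z
        + h * (rexp (Xs x k) / Z ^ 2 * (1 / (1 + c))) := by
      field_simp
      have : c * Z * As h x k = h * (α * As h x k) * rexp (Xs x k) := by rw [hcdef]; ring
      rw [hA] at this
      linear_combination -this
    rw [e3]
    ring
end track

def hn (t : ℝ) (n : ℕ) : ℝ := t / (n + 1)
def incr (X : ℝ → ℝ) (t : ℝ) (n k : ℕ) : ℝ := X ((k + 1 : ℕ) * hn t n) - X (k * hn t n)

lemma hn_pos (t : ℝ) (ht : 0 < t) (n : ℕ) : 0 < hn t n := by unfold hn; positivity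

lemma hn_mul (t : ℝ) (n : ℕ) : ((n + 1 : ℕ) : ℝ) * hn t n = t := by
  unfold hn; push_cast; field_simp

lemma hn_tendsto (t : ℝ) : Filter.Tendsto (hn t) Filter.atTop (nhds 0) := by
  unfold hn
  exact tendsto_const_div_atTop_nhds_zero_nat t |>.comp (Filter.tendsto_add_atTop_nat 1) |>.congr
    (fun n => by simp)

lemma Xs_incr (X : ℝ → ℝ) (t : ℝ) (n k : ℕ) (h0 : X 0 = 0) :
    Xs (incr X t n) k = X (k * hn t n) := by
  unfold Xs incr
  rw [Finset.sum_range_sub (fun k : ℕ => X (k * hn t n))]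
  simp [h0]

lemma kh_mem (t : ℝ) (ht : 0 < t) (n k : ℕ) (hk : k ≤ n + 1) : k * hn t n ∈ Set.Icc 0 t := by
  have h := hn_pos t ht n
  refine ⟨by positivity, ?_⟩
  refine le_trans ?_ (hn_mul t n).le
  have : (k : ℝ) ≤ (n + 1 : ℕ) := by exact_mod_cast hk
  gcongr

lemma modulus (f : ℝ → ℝ) (hf : Continuous f) (t : ℝ) (ht : 0 < t) (ε : ℝ) (hε : 0 < ε) :
    ∀ᶠ n : ℕ in Filter.atTop, ∀ k : ℕ, k < n + 1 → ∀ s ∈ Set.Icc (k * hn t n) ((k + 1 : ℕ) * hn t n),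
      |f s - f (k * hn t n)| ≤ ε := by
  have huc := isCompact_Icc.uniformContinuousOn_of_continuous (hf.continuousOn (s := Set.Icc 0 t))
  obtain ⟨δ, hδ, h⟩ := Metric.uniformContinuousOn_iff.1 huc ε hε
  filter_upwards [(hn_tendsto t).eventually (gt_mem_nhds hδ)] with n hn' k hk s hs
  have h1 := kh_mem t ht n k hk.le
  have h2 := kh_mem t ht n (k + 1) hk
  refine (h s ⟨h1.1.trans hs.1, hs.2.trans h2.2⟩ _ h1 ?_).le
  rw [Real.dist_eq, abs_of_nonneg (by linarith [hs.1])]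
  have := hs.2
  push_cast at this
  linarith

lemma riemann (f : ℝ → ℝ) (hf : Continuous f) (t : ℝ) (ht : 0 < t) :
    Filter.Tendsto (fun n : ℕ => ∑ k ∈ Finset.range (n + 1), hn t n * f (k * hn t n))
      Filter.atTop (nhds (∫ s in (0 : ℝ)..t, f s)) := by
  rw [Metric.tendsto_atTop']
  intro ε hε
  have := modulus f hf t ht (ε / (2 * t)) (by positivity)
  obtain ⟨N, hN⟩ := Filter.eventually_atTop.1 this
  refine ⟨N, fun n hn' => ?_⟩
  have hm := hN n hn'.le
  have hp := hn_pos t ht n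
  have h1 : ∫ s in (0 : ℝ)..t, f s = ∑ k ∈ Finset.range (n + 1),
      ∫ s in (k * hn t n)..((k + 1 : ℕ) * hn t n), f s := by
    rw [intervalIntegral.sum_integral_adjacent_intervals
      (a := fun k : ℕ => (k : ℝ) * hn t n) (fun k _ => hf.intervalIntegrable _ _)]
    rw [hn_mul]
    simp
  rw [Real.dist_eq, h1, ← Finset.sum_sub_distrib]
  refine lt_of_le_of_lt (Finset.abs_sum_le_sum_abs _ _) ?_
  have h2 : ∀ k ∈ Finset.range (n + 1), |hn t n * f (k * hn t n) -
      ∫ s in (k * hn t n)..((k + 1 : ℕ) * hn t n), f s| ≤ ε / (2 * t) * hn t n := by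
    intro k hk
    have hle : (k : ℝ) * hn t n ≤ (k + 1 : ℕ) * hn t n := by push_cast; linarith
    have e : hn t n * f (k * hn t n) = ∫ s in (k * hn t n)..((k + 1 : ℕ) * hn t n),
        f (k * hn t n) := by
      rw [intervalIntegral.integral_const, smul_eq_mul]; push_cast; ring
    rw [e, abs_sub_comm, ← intervalIntegral.integral_sub (hf.intervalIntegrable _ _) (by simp)]
    have := intervalIntegral.norm_integral_le_of_norm_le_const (a := k * hn t n)
      (b := (k + 1 : ℕ) * hn t n) (C := ε / (2 * t)) (f := fun s => f s - f (k * hn t n))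
      (fun s hs => by
        rw [Set.uIoc_of_le hle] at hs
        exact hm k (Finset.mem_range.1 hk) s ⟨hs.1.le, hs.2⟩)
    refine this.trans (le_of_eq ?_)
    rw [abs_of_nonneg (by linarith)]
    push_cast; ring
  refine lt_of_le_of_lt (Finset.sum_le_sum h2) ?_
  rw [Finset.sum_const, Finset.card_range, nsmul_eq_mul]
  have := hn_mul t n
  have e : ((n + 1 : ℕ) : ℝ) * (ε / (2 * t) * hn t n) = ε / 2 := by
    rw [mul_left_comm, this]; field_simp
  rw [e]; linarith

lemma As_tendsto (X : ℝ → ℝ) (hX : Continuous X) (h0 : X 0 = 0) (t : ℝ) (ht : 0 < t) :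
    Filter.Tendsto (fun n : ℕ => As (hn t n) (incr X t n) (n + 1))
      Filter.atTop (nhds (∫ s in (0 : ℝ)..t, rexp (X s))) := by
  refine (riemann (fun s => rexp (X s)) (by fun_prop) t ht).congr fun n => ?_
  unfold As
  simp only [Xs_incr _ _ _ _ h0]

lemma sum_h_tendsto (X : ℝ → ℝ) (hX : Continuous X) (t : ℝ) (ht : 0 < t) :
    Filter.Tendsto (fun n : ℕ => ∑ k ∈ Finset.range (n + 1),
      (hn t n * |incr X t n k| + hn t n ^ 2)) Filter.atTop (nhds 0) := by
  have a1 : Filter.Tendsto (fun n : ℕ => ∑ k ∈ Finset.range (n + 1),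
      hn t n * |incr X t n k|) Filter.atTop (nhds 0) := by
    rw [Metric.tendsto_nhds]
    intro ε hε
    filter_upwards [modulus X hX t ht (ε / (2 * t)) (by positivity)] with n hn'
    have hp := hn_pos t ht n
    rw [Real.dist_0_eq_abs, abs_of_nonneg (Finset.sum_nonneg fun k _ => by positivity)]
    have : ∀ k ∈ Finset.range (n + 1), hn t n * |incr X t n k| ≤ hn t n * (ε / (2 * t)) := by
      intro k hk
      gcongr
      exact hn' k (Finset.mem_range.1 hk) _ ⟨by push_cast; linarith, le_rfl⟩
    refine lt_of_le_of_lt (Finset.sum_le_sum this) ?_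
    rw [Finset.sum_const, Finset.card_range, nsmul_eq_mul, ← mul_assoc, hn_mul]
    field_simp; linarith
  have a2 : Filter.Tendsto (fun n : ℕ => t * hn t n) Filter.atTop (nhds 0) := by
    simpa using (hn_tendsto t).const_mul t
  refine (by simpa using a1.add a2 : Filter.Tendsto _ _ (nhds (0 : ℝ))).congr fun n => ?_
  rw [Finset.sum_add_distrib, Finset.sum_const, Finset.card_range, nsmul_eq_mul, sq,
    ← mul_assoc, hn_mul]

lemma As_nonneg (h : ℝ) (hh : 0 < h) (x : ℕ → ℝ) (k : ℕ) : 0 ≤ As h x k :=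
  Finset.sum_nonneg fun _ _ => by positivity

lemma As_mono (h : ℝ) (hh : 0 < h) (x : ℕ → ℝ) : Monotone (As h x) :=
  monotone_nat_of_le_succ fun k => by rw [As_succ]; have := Real.exp_pos (Xs x k); nlinarith

lemma path_limit (X : ℝ → ℝ) (hX : Continuous X) (h0 : X 0 = 0) (t α : ℝ) (ht : 0 < t)
    (hZ : 0 < 1 + α * ∫ s in (0 : ℝ)..t, rexp (X s)) (l : Filter ℕ) (hl : l ≤ Filter.atTop)
    (h3 : Filter.Tendsto (fun n : ℕ => ∑ k ∈ Finset.range (n + 1), |incr X t n k| ^ 3) l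
      (nhds 0)) :
    Filter.Tendsto (fun n => Ws α (hn t n) (incr X t n) (n + 1)) l
      (nhds (rexp (2 * (α * rexp (X t) / (1 + α * ∫ s in (0 : ℝ)..t, rexp (X s)) - α)))) ∧
    Filter.Tendsto (fun n => Ys α (hn t n) (incr X t n) (n + 1)) l
      (nhds (X t - 2 * Real.log (1 + α * ∫ s in (0 : ℝ)..t, rexp (X s)))) ∧
    Filter.Tendsto (fun n => AY α (hn t n) (incr X t n) (n + 1)) l
      (nhds ((∫ s in (0 : ℝ)..t, rexp (X s)) / (1 + α * ∫ s in (0 : ℝ)..t, rexp (X s)))) := by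
  have hA := (As_tendsto X hX h0 t ht).mono_left hl
  set a := ∫ s in (0 : ℝ)..t, rexp (X s) with ha
  have hZn : Filter.Tendsto (fun n : ℕ => 1 + α * As (hn t n) (incr X t n) (n + 1)) l
      (nhds (1 + α * a)) := (hA.const_mul α).const_add 1
  have hXn : ∀ n : ℕ, Xs (incr X t n) (n + 1) = X t := fun n => by
    rw [Xs_incr _ _ _ _ h0, hn_mul]
  have hκn : Filter.Tendsto (fun n : ℕ => kap α (hn t n) (incr X t n) (n + 1)) l
      (nhds (α * rexp (X t) / (1 + α * a))) := by
    unfold kap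
    simp only [hXn]
    exact tendsto_const_nhds.div hZn hZ.ne'
  obtain ⟨z, hz, hz1, hza⟩ : ∃ z, 0 < z ∧ z ≤ 1 ∧ z < 1 + α * a :=
    ⟨min 1 ((1 + α * a) / 2), by positivity, min_le_left _ _,
      (min_le_right _ _).trans_lt (by linarith)⟩
  obtain ⟨E, hE⟩ := (isCompact_Icc (a := (0 : ℝ)) (b := t)).bddAbove_image
    (f := fun s => rexp (X s)) (by fun_prop)
  have hE' : ∀ n : ℕ, ∀ k ≤ n + 1, rexp (Xs (incr X t n) k) ≤ E := by
    intro n k hk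
    rw [Xs_incr _ _ _ _ h0]
    exact hE ⟨_, kh_mem t ht n k hk, rfl⟩
  have hE0 : 0 ≤ E := (Real.exp_pos _).le.trans (hE' 0 0 (by simp))
  set K := |α| * E / z with hKd
  have hK0 : 0 ≤ K := by positivity
  have evZ : ∀ᶠ n in l, ∀ k ≤ n + 1, z ≤ 1 + α * As (hn t n) (incr X t n) k := by
    filter_upwards [hZn.eventually (lt_mem_nhds hza)] with n hn' k hk
    have hp := hn_pos t ht n
    have p1 := As_nonneg _ hp (incr X t n) k
    have p2 := As_mono _ hp (incr X t n) hk
    rcases le_total 0 α with h | h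
    · nlinarith
    · nlinarith
  have evκ : ∀ᶠ n in l, ∀ k ≤ n + 1, |kap α (hn t n) (incr X t n) k| ≤ K := by
    filter_upwards [evZ] with n hn' k hk
    have q1 := hn' k hk
    rw [kap, abs_div, abs_mul, abs_of_pos (Real.exp_pos _), abs_of_pos (hz.trans_le q1), hKd]
    have := hE' n k hk
    gcongr
  have evh : ∀ᶠ n in l, K * hn t n ≤ 1 / 2 := by
    have : Filter.Tendsto (fun n => K * hn t n) l (nhds 0) := by
      simpa using ((hn_tendsto t).const_mul K).mono_left hl
    filter_upwards [this.eventually (gt_mem_nhds (show (0 : ℝ) < 1 / 2 by norm_num))] with n h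
    exact h.le
  have evx : ∀ᶠ n in l, ∀ k < n + 1, |incr X t n k| ≤ 1 := by
    filter_upwards [hl (modulus X hX t ht 1 one_pos)] with n hn' k hk
    have hp := hn_pos t ht n
    exact hn' k hk _ ⟨by push_cast; linarith, le_rfl⟩
  have hS := (sum_h_tendsto X hX t ht).mono_left hl
  set S := fun n : ℕ => ∑ k ∈ Finset.range (n + 1), (hn t n * |incr X t n k| + hn t n ^ 2)
  have hη : Filter.Tendsto (fun n => (K + 4 * K ^ 2) * S n) l (nhds 0) := by
    simpa using hS.const_mul (K + 4 * K ^ 2)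
  have evY : ∀ᶠ n in l, ∀ k ≤ n + 1, |Ys α (hn t n) (incr X t n) k - (Xs (incr X t n) k
      - 2 * Real.log (1 + α * As (hn t n) (incr X t n) k))| ≤ (K + 4 * K ^ 2) * S n := by
    filter_upwards [evZ, evκ, evh] with n n1 n2 n3 k hk
    have hp := hn_pos t ht n
    refine (track_Y α (hn t n) K z (incr X t n) (n + 1) hp hz n1 n2 n3 k hk).trans ?_
    gcongr
    refine Finset.sum_le_sum_of_subset_of_nonneg (Finset.range_mono hk) fun i _ _ => ?_
    positivity
  refine ⟨?_, ?_, ?_⟩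
  · have hlogW : Filter.Tendsto (fun n => Real.log (Ws α (hn t n) (incr X t n) (n + 1))) l
        (nhds (2 * (α * rexp (X t) / (1 + α * a) - α))) := by
      have lim1 : Filter.Tendsto (fun n : ℕ => 2 * (kap α (hn t n) (incr X t n) (n + 1) - α)) l
          (nhds (2 * (α * rexp (X t) / (1 + α * a) - α))) := (hκn.sub_const α).const_mul 2
      have lim2 : Filter.Tendsto (fun n => Real.log (Ws α (hn t n) (incr X t n) (n + 1)) -
          2 * (kap α (hn t n) (incr X t n) (n + 1) - α)) l (nhds 0) := by
        have b0 : Filter.Tendsto (fun n : ℕ => (3 * K + 8 * K ^ 2 + 12 * K ^ 3) *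
            (∑ k ∈ Finset.range (n + 1), |incr X t n k| ^ 3 + S n)) l (nhds 0) := by
          simpa using (h3.add hS).const_mul (3 * K + 8 * K ^ 2 + 12 * K ^ 3)
        refine squeeze_zero_norm' ?_ b0
        filter_upwards [evZ, evκ, evh, evx] with n n1 n2 n3 n4
        have := (track_W α (hn t n) K z (incr X t n) (n + 1) (hn_pos t ht n) hz n1 n2 n3 n4
          (n + 1) le_rfl).2
        have k0 : kap α (hn t n) (incr X t n) 0 = α := by simp [kap, Xs, As]
        rw [k0] at this
        rw [Real.norm_eq_abs]
        refine this.trans (le_of_eq ?_)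
        rw [← Finset.sum_add_distrib]
        simp only [add_assoc]
      simpa using lim2.add lim1
    refine ((Real.continuous_exp.tendsto _).comp hlogW).congr' ?_
    filter_upwards [evZ, evκ, evh, evx] with n n1 n2 n3 n4
    have := (track_W α (hn t n) K z (incr X t n) (n + 1) (hn_pos t ht n) hz n1 n2 n3 n4
          (n + 1) le_rfl).1
    exact Real.exp_log this
  · have lim1 : Filter.Tendsto (fun n : ℕ => Xs (incr X t n) (n + 1)
        - 2 * Real.log (1 + α * As (hn t n) (incr X t n) (n + 1))) l
        (nhds (X t - 2 * Real.log (1 + α * a))) := by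
      simp only [hXn]
      exact ((hZn.log hZ.ne').const_mul 2).const_sub _
    have lim2 := squeeze_zero_norm' (f := fun n : ℕ => Ys α (hn t n) (incr X t n) (n + 1) -
      (Xs (incr X t n) (n + 1) - 2 * Real.log (1 + α * As (hn t n) (incr X t n) (n + 1))))
      (by filter_upwards [evY] with n h using h (n + 1) le_rfl) hη
    simpa using lim2.add lim1
  · have lim1 : Filter.Tendsto (fun n : ℕ => As (hn t n) (incr X t n) (n + 1) /
        (1 + α * As (hn t n) (incr X t n) (n + 1))) l (nhds (a / (1 + α * a))) :=
      hA.div hZn hZ.ne'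
    have b0 : Filter.Tendsto (fun n : ℕ => t * (E / z ^ 2 *
        (2 * ((K + 4 * K ^ 2) * S n) + 2 * (K * hn t n)))) l (nhds 0) := by
      simpa using (((hη.const_mul 2).add ((((hn_tendsto t).mono_left hl).const_mul K).const_mul
        2)).const_mul (E / z ^ 2)).const_mul t
    have lim2 := squeeze_zero_norm' (f := fun n : ℕ => AY α (hn t n) (incr X t n) (n + 1) -
      As (hn t n) (incr X t n) (n + 1) / (1 + α * As (hn t n) (incr X t n) (n + 1)))
      (by
        filter_upwards [evZ, evκ, evh, evY, hη.eventually (gt_mem_nhds one_pos)]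
          with n n1 n2 n3 n4 n5
        have := track_A α (hn t n) K z E (incr X t n) (n + 1) _ n5.le (hn_pos t ht n) hz n1
          (hE' n) n2 n3 n4 (n + 1) le_rfl
        rw [← mul_assoc, hn_mul] at this
        exact this) b0
    simpa using lim2.add lim1

lemma gauss_rep (h : ℝ) (hh : 0 < h) :
    gaussianReal (-(h / 2)) h.toNNReal
      = (gaussianReal 0 1).map (fun y => Real.sqrt h * y - h / 2) := by
  have : (fun y => Real.sqrt h * y - h / 2) = (fun y => y - h / 2) ∘ (fun y => Real.sqrt h * y) :=
    rfl
  rw [this, ← Measure.map_map (by fun_prop) (by fun_prop), gaussianReal_map_const_mul,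
    gaussianReal_map_sub_const]
  congr 1
  · ring
  · ext
    simp [Real.sq_sqrt hh.le, hh.le]

lemma third_moment (h t : ℝ) (hh : 0 < h) (hht : h ≤ t) :
    ∫⁻ y, ENNReal.ofReal (|y| ^ 3) ∂(gaussianReal (-(h / 2)) h.toNNReal)
      ≤ ENNReal.ofReal (h * Real.sqrt h) *
        ∫⁻ y, ENNReal.ofReal ((|y| + Real.sqrt t) ^ 3) ∂(gaussianReal 0 1) := by
  rw [gauss_rep h hh, lintegral_map (by fun_prop) (by fun_prop),
    ← lintegral_const_mul _ (by fun_prop)]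
  refine lintegral_mono fun y => ?_
  rw [← ENNReal.ofReal_mul (by positivity)]
  refine ENNReal.ofReal_le_ofReal ?_
  have hs := Real.mul_self_sqrt hh.le
  have hs0 := Real.sqrt_nonneg h
  have hst := Real.sqrt_le_sqrt hht
  have : |Real.sqrt h * y - h / 2| ≤ Real.sqrt h * (|y| + Real.sqrt t) := by
    refine (abs_sub _ _).trans ?_
    rw [abs_mul, abs_of_nonneg hs0, abs_of_pos (by positivity : 0 < h / 2)]
    nlinarith
  calc |Real.sqrt h * y - h / 2| ^ 3 ≤ (Real.sqrt h * (|y| + Real.sqrt t)) ^ 3 := by gcongr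
    _ = (Real.sqrt h * Real.sqrt h) * Real.sqrt h * (|y| + Real.sqrt t) ^ 3 := by ring
    _ = _ := by rw [hs]

lemma third_fin (t : ℝ) :
    ∫⁻ y, ENNReal.ofReal ((|y| + Real.sqrt t) ^ 3) ∂(gaussianReal 0 1) ≠ ⊤ := by
  have h1 : MemLp (fun y : ℝ => |y| + Real.sqrt t) (3 : ℕ) (gaussianReal 0 1) :=
    (memLp_id_gaussianReal' (μ := 0) (v := 1) ((3 : ℕ) : ENNReal) (by simp)).norm.add
      (memLp_const _)
  have h2 := h1.integrable_norm_pow (by norm_num)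
  have h3 := h2.lintegral_lt_top
  refine ne_of_lt (lt_of_le_of_lt (lintegral_mono fun y => ?_) h3)
  refine ENNReal.ofReal_le_ofReal ?_
  have hnn : 0 ≤ |y| + Real.sqrt t := by positivity
  exact pow_le_pow_left₀ hnn (Real.le_norm_self _) 3

/-- the drifted path -/
def Xp {Ω : Type*} (B : ℝ → Ω → ℝ) (ω : Ω) (s : ℝ) : ℝ := B s ω - s / 2

section prob
variable {Ω : Type*} [MeasurableSpace Ω] {P : Measure Ω} {B : ℝ → Ω → ℝ}

lemma Xp_cont (hB : IsBrownianMotion P B) (ω : Ω) : Continuous (Xp B ω) := by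
  have := hB.continuous_paths ω
  unfold Xp
  fun_prop

lemma Xp_zero (hB : IsBrownianMotion P B) (ω : Ω) : Xp B ω 0 = 0 := by
  simp [Xp, hB.start]

lemma Xp_meas (hB : IsBrownianMotion P B) (s : ℝ) : Measurable (fun ω => Xp B ω s) := by
  have := hB.measurable s
  unfold Xp
  fun_prop

lemma incr_meas (hB : IsBrownianMotion P B) (t : ℝ) (n k : ℕ) :
    Measurable (fun ω => incr (Xp B ω) t n k) := by
  unfold incr
  exact (Xp_meas hB _).sub (Xp_meas hB _)

lemma incr_eq (t : ℝ) (n k : ℕ) (ω : Ω) : incr (Xp B ω) t n k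
    = (B ((k + 1 : ℕ) * hn t n) ω - B (k * hn t n) ω) - hn t n / 2 := by
  unfold incr Xp; push_cast; ring

lemma incr_law (hB : IsBrownianMotion P B) (t : ℝ) (ht : 0 < t) (n k : ℕ) :
    P.map (fun ω => incr (Xp B ω) t n k)
      = gaussianReal (-(hn t n / 2)) (hn t n).toNNReal := by
  have hp := hn_pos t ht n
  have h1 := hB.gaussian_increments (k * hn t n) ((k + 1 : ℕ) * hn t n) (by positivity)
    (by push_cast; linarith)
  simp only [incr_eq]
  have : (fun ω => (B ((k + 1 : ℕ) * hn t n) ω - B (k * hn t n) ω) - hn t n / 2)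
    = (fun y => y - hn t n / 2) ∘ (fun ω => B ((k + 1 : ℕ) * hn t n) ω - B (k * hn t n) ω) := rfl
  have hm : Measurable (fun ω => B ((k + 1 : ℕ) * hn t n) ω - B (k * hn t n) ω) :=
    (hB.measurable _).sub (hB.measurable _)
  rw [this, ← Measure.map_map (by fun_prop) hm, h1,
    gaussianReal_map_sub_const]
  congr 2
  · ring
  · push_cast; ring

lemma incr_indep (hB : IsBrownianMotion P B) (t : ℝ) (ht : 0 < t) (n : ℕ) :
    iIndepFun (fun k ω => incr (Xp B ω) t n k) P := by
  have hp := hn_pos t ht n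
  have h1 := hB.indep_increments (fun k => k * hn t n)
    (monotone_nat_of_le_succ fun k => by push_cast; linarith) (by simp)
  have h2 := h1.comp (fun _ y => y - hn t n / 2) (fun _ => by fun_prop)
  simp only [incr_eq]
  exact h2

lemma A_meas (hB : IsBrownianMotion P B) (t : ℝ) (ht : 0 < t) : Measurable (A B t) := by
  refine measurable_of_tendsto_metrizable
    (f := fun n ω => As (hn t n) (incr (Xp B ω) t n) (n + 1)) (fun n => ?_) ?_
  · exact meas_As (x := fun k ω => incr (Xp B ω) t n k) _ _ fun j _ => incr_meas hB t n j
  · rw [tendsto_pi_nhds]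
    exact fun ω => As_tendsto (Xp B ω) (Xp_cont hB ω) (Xp_zero hB ω) t ht

lemma A_pos (hB : IsBrownianMotion P B) (t : ℝ) (ht : 0 < t) (ω : Ω) : 0 < A B t ω := by
  have := Xp_cont hB ω
  exact intervalIntegral.intervalIntegral_pos_of_pos
    (f := fun s => rexp (Xp B ω s)) (Continuous.intervalIntegrable (by fun_prop) _ _)
    (fun s => Real.exp_pos _) ht

lemma exists_subseq (hB : IsBrownianMotion P B) (t : ℝ) (ht : 0 < t) :
    ∃ ns : ℕ → ℕ, StrictMono ns ∧ ∀ᵐ ω ∂P, Filter.Tendsto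
      (fun i => ∑ k ∈ Finset.range (ns i + 1), |incr (Xp B ω) t (ns i) k| ^ 3)
      Filter.atTop (nhds 0) := by
  have hm : ∀ n : ℕ, Measurable
      (fun ω => ∑ k ∈ Finset.range (n + 1), |incr (Xp B ω) t n k| ^ 3) := fun n =>
    Finset.measurable_sum _ fun k _ => by
      have := incr_meas hB t n k
      fun_prop
  refine (tendstoInMeasure_of_tendsto_eLpNorm (p := 1) one_ne_zero
    (f := fun n ω => ∑ k ∈ Finset.range (n + 1), |incr (Xp B ω) t n k| ^ 3) (g := fun _ => 0)
    (fun n => (hm n).aestronglyMeasurable) aestronglyMeasurable_const ?_).exists_seq_tendsto_ae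
  set C := ∫⁻ y, ENNReal.ofReal ((|y| + Real.sqrt t) ^ 3) ∂(gaussianReal 0 1) with hC
  have lim : Filter.Tendsto (fun n : ℕ => ENNReal.ofReal (t * Real.sqrt (hn t n)) * C)
      Filter.atTop (nhds 0) := by
    have a1 : Filter.Tendsto (fun n : ℕ => t * Real.sqrt (hn t n)) Filter.atTop (nhds 0) := by
      simpa using ((Real.continuous_sqrt.tendsto _).comp (hn_tendsto t)).const_mul t
    have a2 := ENNReal.tendsto_ofReal a1
    rw [ENNReal.ofReal_zero] at a2
    simpa using ENNReal.Tendsto.mul_const a2 (Or.inr (third_fin t))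
  refine tendsto_of_tendsto_of_tendsto_of_le_of_le tendsto_const_nhds lim (fun _ => zero_le) ?_
  intro n
  have hp := hn_pos t ht n
  have hle : hn t n ≤ t := by
    have := (kh_mem t ht n 1 (by omega)).2
    simpa using this
  simp only [eLpNorm_one_eq_lintegral_enorm]
  have e1 : ∀ ω, ‖(((fun ω => ∑ k ∈ Finset.range (n + 1), |incr (Xp B ω) t n k| ^ 3) : Ω → ℝ)
      - ((fun _ => (0 : ℝ)) : Ω → ℝ)) ω‖ₑ = ∑ k ∈ Finset.range (n + 1),
        ENNReal.ofReal (|incr (Xp B ω) t n k| ^ 3) := by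
    intro ω
    rw [← ENNReal.ofReal_sum_of_nonneg (fun _ _ => by positivity)]
    simp only [Pi.sub_apply, sub_zero]
    exact Real.enorm_of_nonneg (Finset.sum_nonneg fun _ _ => by positivity)
  simp only [e1]
  rw [lintegral_finsetSum _ (fun k _ => by have := incr_meas hB t n k; fun_prop)]
  have e2 : ∀ k ∈ Finset.range (n + 1), ∫⁻ ω, ENNReal.ofReal (|incr (Xp B ω) t n k| ^ 3) ∂P
      ≤ ENNReal.ofReal (hn t n * Real.sqrt (hn t n)) * C := by
    intro k _
    rw [← lintegral_map (f := fun y => ENNReal.ofReal (|y| ^ 3)) (by fun_prop)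
      (incr_meas hB t n k), incr_law hB t ht]
    exact third_moment _ _ hp hle
  refine (Finset.sum_le_sum e2).trans (le_of_eq ?_)
  rw [Finset.sum_const, Finset.card_range, nsmul_eq_mul, ← mul_assoc]
  congr 1
  rw [← ENNReal.ofReal_natCast, ← ENNReal.ofReal_mul (by positivity), ← mul_assoc, hn_mul]

/-- limiting density -/
def Dn (B : ℝ → Ω → ℝ) (α t : ℝ) (ω : Ω) : ENNReal :=
  {ω | 0 < 1 + α * A B t ω}.indicator (fun ω =>
    ENNReal.ofReal (rexp (2 * (α * rexp (Xp B ω t) / (1 + α * A B t ω) - α)))) ω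

lemma Dn_meas (hB : IsBrownianMotion P B) (α t : ℝ) (ht : 0 < t) : Measurable (Dn B α t) := by
  have h1 := A_meas hB t ht
  have h2 := Xp_meas hB t
  unfold Dn
  refine Measurable.indicator (by fun_prop) ?_
  exact measurableSet_lt measurable_const (by fun_prop)

lemma key_cont (hB : IsBrownianMotion P B) (α t : ℝ) (ht : 0 < t)
    (G : BoundedContinuousFunction (ℝ × ℝ) NNReal) :
    ∫⁻ ω, Dn B α t ω * (G (Xp B ω t - 2 * Real.log (1 + α * A B t ω),
        A B t ω / (1 + α * A B t ω)) : ENNReal) ∂P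
      ≤ ∫⁻ ω, (G (Xp B ω t, A B t ω) : ENNReal) ∂P := by
  have := hB.isProbabilityMeasure
  obtain ⟨ns, hns, hae⟩ := exists_subseq hB t ht
  have hGm : Measurable (fun p => (G p : ENNReal)) :=
    measurable_coe_nnreal_ennreal.comp G.continuous.measurable
  have hXs : ∀ n ω, Xs (incr (Xp B ω) t n) (n + 1) = Xp B ω t := fun n ω => by
    rw [Xs_incr _ _ _ _ (Xp_zero hB ω), hn_mul]
  have hlim : Filter.Tendsto (fun i => ∫⁻ ω, (G (Xs (incr (Xp B ω) t (ns i)) (ns i + 1),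
      As (hn t (ns i)) (incr (Xp B ω) t (ns i)) (ns i + 1)) : ENNReal) ∂P) Filter.atTop
      (nhds (∫⁻ ω, (G (Xp B ω t, A B t ω) : ENNReal) ∂P)) := by
    refine tendsto_lintegral_of_dominated_convergence (fun _ => (nndist G 0 : ENNReal))
      (fun i => hGm.comp ?_) (fun i => ?_) (by simp) ?_
    · exact (meas_Xs (x := fun k ω => incr (Xp B ω) t (ns i) k) _ fun j _ => incr_meas hB t _ j).prodMk
        (meas_As (x := fun k ω => incr (Xp B ω) t (ns i) k) _ _ fun j _ => incr_meas hB t _ j)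
    · refine Filter.Eventually.of_forall fun ω => ?_
      exact ENNReal.coe_le_coe.2 (BoundedContinuousFunction.NNReal.upper_bound G _)
    · refine Filter.Eventually.of_forall fun ω => ?_
      simp only [hXs]
      have h1 := (As_tendsto (Xp B ω) (Xp_cont hB ω) (Xp_zero hB ω) t ht).comp hns.tendsto_atTop
      refine ENNReal.tendsto_coe.2 ((G.continuous.tendsto _).comp ?_)
      exact tendsto_const_nhds.prodMk_nhds h1
  have hb : ∀ i, ∫⁻ ω, ENNReal.ofReal (Ws α (hn t (ns i)) (incr (Xp B ω) t (ns i)) (ns i + 1)) *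
      (G (Ys α (hn t (ns i)) (incr (Xp B ω) t (ns i)) (ns i + 1),
        AY α (hn t (ns i)) (incr (Xp B ω) t (ns i)) (ns i + 1)) : ENNReal) ∂P
      ≤ ∫⁻ ω, (G (Xs (incr (Xp B ω) t (ns i)) (ns i + 1),
      As (hn t (ns i)) (incr (Xp B ω) t (ns i)) (ns i + 1)) : ENNReal) ∂P := fun i =>
    discrete_bound P α (hn t (ns i)) (hn_pos t ht _) (fun k ω => incr (Xp B ω) t (ns i) k)
      (incr_meas hB t _) (incr_indep hB t ht _) (incr_law hB t ht _) (ns i + 1)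
      (fun p => (G p : ENNReal)) hGm
  rw [← hlim.liminf_eq]
  refine le_trans ?_ (Filter.liminf_le_liminf (Filter.Eventually.of_forall hb))
  refine le_trans ?_ (lintegral_liminf_le fun i => ?_)
  · refine lintegral_mono_ae ?_
    filter_upwards [hae] with ω hω
    by_cases hZ : 0 < 1 + α * A B t ω
    · obtain ⟨l1, l2, l3⟩ := path_limit (Xp B ω) (Xp_cont hB ω) (Xp_zero hB ω) t α ht hZ
        (Filter.map ns Filter.atTop) hns.tendsto_atTop hω
      have l4 := (ENNReal.continuous_coe.comp G.continuous).tendsto _ |>.comp (l2.prodMk_nhds l3)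
      have l5 := ENNReal.Tendsto.mul (ENNReal.tendsto_ofReal l1)
        (Or.inr ENNReal.coe_ne_top) l4 (Or.inr ENNReal.ofReal_ne_top)
      have l6 := Filter.tendsto_map'_iff.1 l5
      refine le_of_eq ?_
      rw [Dn, Set.indicator_of_mem (by exact hZ)]
      exact l6.liminf_eq.symm
    · rw [Dn, Set.indicator_of_notMem (by exact hZ), zero_mul]
      exact zero_le
  · have m1 := meas_Ws (x := fun k ω => incr (Xp B ω) t (ns i) k) α (hn t (ns i)) (ns i + 1)
      fun j _ => incr_meas hB t _ j
    have m2 := meas_Ys (x := fun k ω => incr (Xp B ω) t (ns i) k) α (hn t (ns i)) (ns i + 1)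
      fun j _ => incr_meas hB t _ j
    have m3 := meas_AY (x := fun k ω => incr (Xp B ω) t (ns i) k) α (hn t (ns i)) (ns i + 1)
      fun j _ => incr_meas hB t _ j
    exact m1.ennreal_ofReal.mul (hGm.comp (m2.prodMk m3))

lemma measure_le_of_cont (μ ν : Measure (ℝ × ℝ)) [IsFiniteMeasure μ]
    (h : ∀ G : BoundedContinuousFunction (ℝ × ℝ) NNReal,
      ∫⁻ p, (G p : ENNReal) ∂ν ≤ ∫⁻ p, (G p : ENNReal) ∂μ) : ν ≤ μ := by
  have hcl : ∀ F : Set (ℝ × ℝ), IsClosed F → ν F ≤ μ F := fun F hF =>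
    ge_of_tendsto' (HasOuterApproxClosed.tendsto_lintegral_apprSeq hF μ) fun n =>
      (HasOuterApproxClosed.measure_le_lintegral hF ν n).trans (h _)
  have : IsFiniteMeasure ν := ⟨(hcl _ isClosed_univ).trans_lt (measure_lt_top _ _)⟩
  rw [Measure.le_iff]
  intro s hs
  rw [hs.measure_eq_iSup_isClosed_of_ne_top (measure_ne_top ν s)]
  exact iSup₂_le fun K hK => iSup_le fun hKc => (hcl K hKc).trans (measure_mono hK)

lemma key (hB : IsBrownianMotion P B) (α t : ℝ) (ht : 0 < t)
    (g : ℝ × ℝ → ENNReal) (hg : Measurable g) :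
    ∫⁻ ω, Dn B α t ω * g (Xp B ω t - 2 * Real.log (1 + α * A B t ω),
        A B t ω / (1 + α * A B t ω)) ∂P
      ≤ ∫⁻ ω, g (Xp B ω t, A B t ω) ∂P := by
  have := hB.isProbabilityMeasure
  have mA := A_meas hB t ht
  have mX := Xp_meas hB t
  have mD := Dn_meas hB α t ht
  have mφ : Measurable (fun ω => (Xp B ω t - 2 * Real.log (1 + α * A B t ω),
        A B t ω / (1 + α * A B t ω))) := by fun_prop
  have mψ : Measurable (fun ω => (Xp B ω t, A B t ω)) := by fun_prop
  have e1 : ∀ g : ℝ × ℝ → ENNReal, Measurable g →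
      ∫⁻ ω, Dn B α t ω * g (Xp B ω t - 2 * Real.log (1 + α * A B t ω),
        A B t ω / (1 + α * A B t ω)) ∂P
      = ∫⁻ p, g p ∂((P.withDensity (Dn B α t)).map
        (fun ω => (Xp B ω t - 2 * Real.log (1 + α * A B t ω),
        A B t ω / (1 + α * A B t ω)))) := by
    intro g hg
    have hgφ : Measurable (fun ω => g (Xp B ω t - 2 * Real.log (1 + α * A B t ω),
        A B t ω / (1 + α * A B t ω))) := hg.comp mφ
    rw [lintegral_map hg mφ, lintegral_withDensity_eq_lintegral_mul _ mD hgφ]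
    rfl
  have e2 : ∀ g : ℝ × ℝ → ENNReal, Measurable g → ∫⁻ ω, g (Xp B ω t, A B t ω) ∂P
      = ∫⁻ p, g p ∂(P.map (fun ω => (Xp B ω t, A B t ω))) := fun g hg => by
    rw [lintegral_map hg mψ]
  rw [e1 g hg, e2 g hg]
  refine lintegral_mono' ?_ le_rfl
  have : IsFiniteMeasure (P.map (fun ω => (Xp B ω t, A B t ω))) := inferInstance
  refine measure_le_of_cont _ _ fun G => ?_
  have hGm : Measurable (fun p => (G p : ENNReal)) :=
    measurable_coe_nnreal_ennreal.comp G.continuous.measurable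
  rw [← e1 _ hGm, ← e2 _ hGm]
  exact key_cont hB α t ht G
end prob

section final
variable {Ω : Type*} [MeasurableSpace Ω] {P : Measure Ω} {B : ℝ → Ω → ℝ}

/-- the test function for the second inequality -/
def gtest (c l : ℝ) (p : ℝ × ℝ) : ENNReal :=
  {p : ℝ × ℝ | 0 < 1 + c * p.2 ∧ p.1 - 2 * Real.log (1 + c * p.2) ≤ l}.indicator
    (fun p => ENNReal.ofReal (rexp (2 * (c * rexp p.1 / (1 + c * p.2) - c)))) p

lemma gtest_meas (c l : ℝ) : Measurable (gtest c l) := by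
  unfold gtest
  refine Measurable.indicator (by fun_prop) ?_
  have h1 : Measurable (fun p : ℝ × ℝ => 1 + c * p.2) := by fun_prop
  have h2 : Measurable (fun p : ℝ × ℝ => p.1 - 2 * Real.log (1 + c * p.2)) := by fun_prop
  exact (measurableSet_lt measurable_const h1).inter (measurableSet_le h2 measurable_const)

lemma ineq_one (hB : IsBrownianMotion P B) (a l t : ℝ) (ha : 0 < a) (ht : 0 < t) :
    ∫⁻ ω, gtest (1 / a) l (Xp B ω t, A B t ω) ∂P ≤ P {ω | Xp B ω t ≤ l ∧ A B t ω < a} := by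
  have mA := A_meas hB t ht
  have mX := Xp_meas hB t
  have hS : MeasurableSet {p : ℝ × ℝ | p.1 ≤ l ∧ p.2 < a} :=
    (measurableSet_le measurable_fst measurable_const).inter
      (measurableSet_lt measurable_snd measurable_const)
  have h := key hB (1 / a) t ht ({p : ℝ × ℝ | p.1 ≤ l ∧ p.2 < a}.indicator 1)
    (measurable_one.indicator hS)
  have hS' : MeasurableSet {ω | Xp B ω t ≤ l ∧ A B t ω < a} :=
    (measurableSet_le mX measurable_const).inter (measurableSet_lt mA measurable_const)
  have e : ∫⁻ ω, ({p : ℝ × ℝ | p.1 ≤ l ∧ p.2 < a}.indicator (1 : ℝ × ℝ → ENNReal))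
      (Xp B ω t, A B t ω) ∂P = P {ω | Xp B ω t ≤ l ∧ A B t ω < a} := by
    rw [← lintegral_indicator_one hS']
    rfl
  rw [e] at h
  refine le_trans (lintegral_mono fun ω => ?_) h
  have hA := A_pos hB t ht ω
  have hZ : 0 < 1 + 1 / a * A B t ω := by positivity
  by_cases hx : Xp B ω t - 2 * Real.log (1 + 1 / a * A B t ω) ≤ l
  · have hlt : A B t ω / (1 + 1 / a * A B t ω) < a := by
      rw [div_lt_iff₀ hZ]
      have : a * (1 + 1 / a * A B t ω) = a + A B t ω := by field_simp
      linarith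
    rw [gtest, Dn, Set.indicator_of_mem (by exact ⟨hZ, hx⟩), Set.indicator_of_mem (by exact hZ),
      Set.indicator_of_mem (by exact ⟨hx, hlt⟩)]
    simp
  · rw [gtest, Set.indicator_of_notMem (by exact fun h => hx h.2)]
    exact zero_le

lemma ineq_two (hB : IsBrownianMotion P B) (a l t : ℝ) (ha : 0 < a) (ht : 0 < t) :
    P {ω | Xp B ω t ≤ l ∧ A B t ω < a} ≤ ∫⁻ ω, gtest (1 / a) l (Xp B ω t, A B t ω) ∂P := by
  have mA := A_meas hB t ht
  have mX := Xp_meas hB t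
  have hS' : MeasurableSet {ω | Xp B ω t ≤ l ∧ A B t ω < a} :=
    (measurableSet_le mX measurable_const).inter (measurableSet_lt mA measurable_const)
  refine le_trans ?_ (key hB (-(1 / a)) t ht (gtest (1 / a) l) (gtest_meas _ _))
  rw [← lintegral_indicator_one hS']
  refine lintegral_mono fun ω => ?_
  by_cases hω : Xp B ω t ≤ l ∧ A B t ω < a
  · obtain ⟨hx, hlt⟩ := hω
    rw [Set.indicator_of_mem (by exact ⟨hx, hlt⟩)]
    have hZ : 0 < 1 + -(1 / a) * A B t ω := by
      have : 1 + -(1 / a) * A B t ω = (a - A B t ω) / a := by field_simp; ring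
      rw [this]
      exact div_pos (by linarith) ha
    set Z := 1 + -(1 / a) * A B t ω with hZd
    have hAZ : 1 + 1 / a * (A B t ω / Z) = Z⁻¹ := by
      have : A B t ω = a * (1 - Z) := by rw [hZd]; field_simp; ring
      rw [this]; field_simp; ring
    have hZi : 0 < Z⁻¹ := inv_pos.2 hZ
    have hexp : rexp (Xp B ω t - 2 * Real.log Z) = rexp (Xp B ω t) / Z ^ 2 := by
      rw [Real.exp_sub, two_mul, Real.exp_add, Real.exp_log hZ, sq]
    rw [gtest, Dn, Set.indicator_of_mem (by exact hZ), Set.indicator_of_mem]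
    · simp only [hAZ, hexp, ← hZd]
      rw [← ENNReal.ofReal_mul (Real.exp_pos _).le, ← Real.exp_add]
      refine le_of_eq ?_
      rw [Pi.one_apply, ← ENNReal.ofReal_one, ← Real.exp_zero]
      congr 2
      field_simp
      ring
    · refine ⟨by simpa only [hAZ] using hZi, ?_⟩
      simp only [hAZ, Real.log_inv]
      linarith
  · rw [Set.indicator_of_notMem (by exact hω)]
    exact zero_le

lemma no_atom (hB : IsBrownianMotion P B) (l t : ℝ) (ht : 0 < t) :
    P {ω | Xp B ω t = l} = 0 := by
  have h1 := hB.gaussian_increments 0 t le_rfl ht.le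
  simp only [hB.start, sub_zero] at h1
  have hv : t.toNNReal ≠ 0 := by simpa using ht
  have := noAtoms_gaussianReal (μ := 0) hv
  have h2 : (P.map (fun ω => B t ω)) {l + t / 2} = 0 := by
    rw [h1]; exact measure_singleton _
  rw [Measure.map_apply (hB.measurable t) (measurableSet_singleton _)] at h2
  convert h2 using 2
  ext ω
  simp only [Xp, Set.mem_setOf_eq, Set.mem_preimage, Set.mem_singleton_iff]
  constructor <;> intro h <;> linarith

lemma joint_aux (hB : IsBrownianMotion P B) (a b t : ℝ) (ha : 0 < a) (hb : 0 < b) (ht : 0 < t) :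
    (P {ω | M B t ω < b ∧ A B t ω < a}).toReal = Real.exp (-2 / a) *
        ∫ ω, ({ω | M B t ω ≤ b * (1 + A B t ω / a) ^ 2}.indicator
          (fun ω => Real.exp (2 * M B t ω / (a + A B t ω))) ω) ∂P := by
  have mA := A_meas hB t ht
  have mX := Xp_meas hB t
  have hMX : ∀ ω, M B t ω = rexp (Xp B ω t) := fun ω => rfl
  have mM : Measurable (M B t) := by
    change Measurable (fun ω => rexp (Xp B ω t))
    fun_prop
  have hP : P {ω | M B t ω < b ∧ A B t ω < a} = P {ω | Xp B ω t ≤ Real.log b ∧ A B t ω < a} := by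
    refine measure_congr ?_
    have h0 : ∀ᵐ ω ∂P, ¬ (Xp B ω t = Real.log b) := by
      rw [ae_iff]; simpa using no_atom hB (Real.log b) t ht
    filter_upwards [h0] with ω hω
    refine propext (and_congr_left fun _ => ?_)
    change M B t ω < b ↔ Xp B ω t ≤ Real.log b
    rw [hMX, ← Real.lt_log_iff_exp_lt hb]
    exact ⟨fun h => h.le, fun h => lt_of_le_of_ne h hω⟩
  rw [hP, le_antisymm (ineq_two hB a (Real.log b) t ha ht) (ineq_one hB a (Real.log b) t ha ht),
    ← integral_const_mul, integral_eq_lintegral_of_nonneg_ae]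
  · congr 1
    refine lintegral_congr fun ω => ?_
    have hA := A_pos hB t ht ω
    have hZ : 0 < 1 + 1 / a * A B t ω := by positivity
    have hZ' : 1 + A B t ω / a = 1 + 1 / a * A B t ω := by ring
    have hiff : M B t ω ≤ b * (1 + A B t ω / a) ^ 2 ↔
        Xp B ω t - 2 * Real.log (1 + 1 / a * A B t ω) ≤ Real.log b := by
      rw [hMX, hZ', ← Real.le_log_iff_exp_le (by positivity),
        Real.log_mul hb.ne' (by positivity), Real.log_pow]
      push_cast
      constructor <;> intro h <;> linarith
    by_cases hx : M B t ω ≤ b * (1 + A B t ω / a) ^ 2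
    · rw [gtest, Set.indicator_of_mem (by exact ⟨hZ, hiff.1 hx⟩), Set.indicator_of_mem (by exact hx),
        ← Real.exp_add, hMX]
      congr 2
      have : a + A B t ω ≠ 0 := by positivity
      have h3 : 1 + 1 / a * A B t ω = (a + A B t ω) / a := by field_simp
      simp only [h3]
      field_simp
      ring
    · rw [gtest, Set.indicator_of_notMem (by exact fun h => hx (hiff.2 h.2)),
        Set.indicator_of_notMem (by exact hx)]
      simp
  · refine Filter.Eventually.of_forall fun ω => ?_
    exact mul_nonneg (Real.exp_pos _).le (Set.indicator_nonneg (fun _ _ => (Real.exp_pos _).le) _)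
  · refine Measurable.aestronglyMeasurable (Measurable.const_mul ?_ _)
    refine Measurable.indicator (by fun_prop) ?_
    exact measurableSet_le mM (by fun_prop)
end final


variable {Ω : Type*} [MeasurableSpace Ω] (P : MeasureTheory.Measure Ω) (B : ℝ → Ω → ℝ)

theorem joint_distribution (hB : IsBrownianMotion P B) (a b t : ℝ)
    (ha : 0 < a) (hb : 0 < b) (ht : 0 < t) :
    (P {ω | M B t ω < b ∧ A B t ω < a}).toReal
      = Real.exp (-2 / a) *
        ∫ ω, ({ω | M B t ω ≤ b * (1 + A B t ω / a) ^ 2}.indicator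
          (fun ω => Real.exp (2 * M B t ω / (a + A B t ω))) ω) ∂P := by
  exact joint_aux hB a b t ha hb ht
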